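/- Let Ω ⊆ ℝⁿ be a nonempty open connected set, let f ∈ C¹(ℝ), and let u ∈ C³(Ω) ∩ C¹(cl Ω) satisfy M[u] + f(u) = 0 in Ω. Suppose sup_Ω |f(u)| < ∞, f′(u(x)) ≤ 0 for every x ∈ Ω, and inf_Ω u > −∞. Then for every x ∈ Ω, |∇u(x)| ≤ max{ √(n/2), sup_{∂Ω} |∇u| } (the supremum over ∂Ω interpreted in [0,∞], so that if ∂Ω = ∅ the conclusion reads |∇u| ≤ √(n/2) on Ω). -/

import Mathlib

open MeasureTheory Set Metric Filter
open scoped RealInnerProductSpace Topology ENNReal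

noncomputable section

variable {n : ℕ}

/-- The quasilinear operator matrix `A(p)` applied to a vector `v`:
`A(p)v = a(|p|) v + (a'(|p|)/|p|) ⟨p,v⟩ p` (with the second term vanishing at `p = 0`). -/
def Aop (a : ℝ → ℝ) (p v : EuclideanSpace ℝ (Fin n)) : EuclideanSpace ℝ (Fin n) :=
  a ‖p‖ • v + ((deriv a ‖p‖ / ‖p‖) * ⟪p, v⟫) • p

/-- `λ₁(t) = a(t) + t·a'(t) = (t a(t))'`. -/
def lam1 (a : ℝ → ℝ) (t : ℝ) : ℝ := a t + t * deriv a t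

/-- `λ₂(t) = a(t)`. -/
def lam2 (a : ℝ → ℝ) (t : ℝ) : ℝ := a t

/-- `λmax(t) = max{λ₁(t), λ₂(t)}`. -/
def lamMax (a : ℝ → ℝ) (t : ℝ) : ℝ := max (lam1 a t) (lam2 a t)

/-- A Lipschitz test function with compact support contained in `Ω`. -/
def IsTestOn (Ω : Set (EuclideanSpace ℝ (Fin n))) (φ : EuclideanSpace ℝ (Fin n) → ℝ) : Prop :=
  (∃ K, LipschitzWith K φ) ∧ HasCompactSupport φ ∧ tsupport φ ⊆ Ω

/-- `u` is a weak solution of `div(a(|∇u|)∇u) + f(u) = 0` in `Ω`. -/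
def IsWeakSolution (a f : ℝ → ℝ) (Ω : Set (EuclideanSpace ℝ (Fin n)))
    (u : EuclideanSpace ℝ (Fin n) → ℝ) : Prop :=
  ∀ φ : EuclideanSpace ℝ (Fin n) → ℝ, IsTestOn Ω φ →
    ∫ x in Ω, a ‖gradient u x‖ * ⟪gradient u x, gradient φ x⟫
      = ∫ x in Ω, f (u x) * φ x

/-- The stability inequality for a solution `u`. -/
def IsStable (a f : ℝ → ℝ) (Ω : Set (EuclideanSpace ℝ (Fin n)))
    (u : EuclideanSpace ℝ (Fin n) → ℝ) : Prop :=
  ∀ φ : EuclideanSpace ℝ (Fin n) → ℝ, IsTestOn Ω φ →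
    ∫ x in Ω, deriv f (u x) * φ x ^ 2
      ≤ ∫ x in Ω, ⟪Aop a (gradient u x) (gradient φ x), gradient φ x⟫

/-- `u` has moderate energy growth in `Ω₀`. -/
def ModerateEnergyGrowth (a : ℝ → ℝ) (u : EuclideanSpace ℝ (Fin n) → ℝ)
    (Ω₀ : Set (EuclideanSpace ℝ (Fin n))) : Prop :=
  ∃ φ : ℕ → EuclideanSpace ℝ (Fin n) → ℝ,
    (∀ j, ∃ K, LipschitzWith K (φ j)) ∧
    (∀ j, HasCompactSupport (φ j)) ∧
    (∀ j x, 0 ≤ φ j x) ∧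
    (∀ K : Set (EuclideanSpace ℝ (Fin n)), IsCompact K → K ⊆ closure Ω₀ →
      TendstoUniformlyOn (fun j => φ j) (fun _ => (1 : ℝ)) atTop K) ∧
    Tendsto (fun j => ∫ x in Ω₀, ‖gradient u x‖ ^ 2 *
        ⟪Aop a (gradient u x) (gradient (φ j) x), gradient (φ j) x⟫)
      atTop (nhds 0)

/-- A `C^k` domain: nonempty, open, connected, with boundary locally given by a regular
`C^k` defining function. -/
def IsCkDomain (k : ℕ∞) (Ω : Set (EuclideanSpace ℝ (Fin n))) : Prop :=
  Ω.Nonempty ∧ IsOpen Ω ∧ IsConnected Ω ∧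
    ∀ p ∈ frontier Ω, ∃ V : Set (EuclideanSpace ℝ (Fin n)),
      ∃ g : EuclideanSpace ℝ (Fin n) → ℝ,
        IsOpen V ∧ p ∈ V ∧ ContDiffOn ℝ k g V ∧ (∀ x ∈ V, gradient g x ≠ 0) ∧
        Ω ∩ V = {x ∈ V | g x < 0}

/-- A `C^k` domain together with its interior unit normal field `η`. -/
def IsCkDomainWithNormal (k : ℕ∞) (Ω : Set (EuclideanSpace ℝ (Fin n)))
    (η : EuclideanSpace ℝ (Fin n) → EuclideanSpace ℝ (Fin n)) : Prop :=
  Ω.Nonempty ∧ IsOpen Ω ∧ IsConnected Ω ∧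
    ∀ p ∈ frontier Ω, ∃ V : Set (EuclideanSpace ℝ (Fin n)),
      ∃ g : EuclideanSpace ℝ (Fin n) → ℝ,
        IsOpen V ∧ p ∈ V ∧ ContDiffOn ℝ k g V ∧ (∀ x ∈ V, gradient g x ≠ 0) ∧
        Ω ∩ V = {x ∈ V | g x < 0} ∧
        η p = -(‖gradient g p‖⁻¹ • gradient g p)

/-- `a ∈ C^{1,1}_loc([0,∞))`: `C¹` on `[0,∞)` with locally Lipschitz derivative. -/
def C11Loc (a : ℝ → ℝ) : Prop :=
  ContDiffOn ℝ 1 a (Ici 0) ∧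
    ∀ t ∈ Ici (0 : ℝ), ∃ V ∈ 𝓝[Ici (0 : ℝ)] t, ∃ K, LipschitzOnWith K (deriv a) V

/-- The mean curvature operator `M[u] = div(∇u/√(1+|∇u|²))`, written as the trace of the
derivative of the vector field `x ↦ (1+|∇u|²)^{-1/2} ∇u`. -/
def meanCurv (u : EuclideanSpace ℝ (Fin n) → ℝ) (x : EuclideanSpace ℝ (Fin n)) : ℝ :=
  ∑ i : Fin n,
    ⟪(fderiv ℝ (fun y => (Real.sqrt (1 + ‖gradient u y‖ ^ 2))⁻¹ • gradient u y) x)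
        (EuclideanSpace.single i (1 : ℝ)),
      EuclideanSpace.single i (1 : ℝ)⟫

/-!
Write `W = √(1 + |∇u|²)` and let `g = I + ∇u ⊗ ∇u` be the metric of the graph of `u`. The equation
differentiated along `∇u`, together with `f' ≤ 0` and the trace inequality `(tr_g D²u)² ≤ n |D²u|²`,
shows that at an interior maximum of `W η`, for any `C²` weight `η > 0`,
`η f² / n + f ⟨∇η, ∇u⟩ / W + tr_g D²η ≤ 0`.
Apply this to the cut-off `η = e^{-t(u - b) - ε|x|²} - τ` with `b ≤ u`, whose positivity set is
bounded and on which `u ≤ b - log τ / t`, so that `f(u)` is bounded there. With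
`θ = η / (η + τ)` the inequality reads `θ f² / n + t f / W + t² (1 - W⁻²) ≤ O(√ε)`, and completing
the square in `f` gives `t² (1 - (1 + n / 4) / (θ W²)) ≤ O(√ε)`. If `W` exceeded at some point both
`√(1 + n / 4)` and its boundary values, then for small `t`, `τ` and finally `ε` the maximum of `W η`
would be interior and violate this.
-/

open scoped Gradient
open InnerProductSpace (rankOne rankOne_apply)

section SecondOrderJets

lemma second_deriv_nonpos_of_isLocalMax {ψ ψ' : ℝ → ℝ} {c s₀ : ℝ} (hmax : IsLocalMax ψ s₀)
    (hψ : ∀ᶠ s in 𝓝 s₀, HasDerivAt ψ (ψ' s) s) (hψ' : HasDerivAt ψ' c s₀) : c ≤ 0 := by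
  have hderiv : deriv ψ =ᶠ[𝓝 s₀] ψ' := hψ.mono fun s hs => hs.deriv
  have hderiv2 : deriv (deriv ψ) s₀ = c := hderiv.deriv_eq.trans hψ'.deriv
  by_contra! hc
  have hmin : IsLocalMin ψ s₀ := isLocalMin_of_deriv_deriv_pos (hderiv2 ▸ hc) hmax.deriv_eq_zero
    hψ.self_of_nhds.continuousAt
  have hconst : ψ =ᶠ[𝓝 s₀] fun _ => ψ s₀ := by
    filter_upwards [hmin, hmax] with s hs hs' using le_antisymm hs' hs
  have hzero : deriv (deriv ψ) s₀ = 0 := by simpa using hconst.deriv.deriv_eq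
  exact hc.ne' (hderiv2.symm.trans hzero)

variable {E : Type*} [NormedAddCommGroup E] [InnerProductSpace ℝ E] [CompleteSpace E]
  {φ φ₁ φ₂ : E → ℝ} {g g₁ g₂ x : E} {H H₁ H₂ : E →L[ℝ] E}

/-- `φ` is differentiable near `x`, with gradient `g` at `x` and Hessian `H` (the derivative of the
gradient field) at `x`. Quantifying over the gradient field keeps the calculus rules short. -/
def HasHessianAt (φ : E → ℝ) (g : E) (H : E →L[ℝ] E) (x : E) : Prop :=
  ∃ φ' : E → E, (∀ᶠ y in 𝓝 x, HasGradientAt φ (φ' y) y) ∧ φ' x = g ∧ HasFDerivAt φ' H x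

namespace HasHessianAt

lemma hasGradientAt (h : HasHessianAt φ g H x) : HasGradientAt φ g x := by
  obtain ⟨φ', hφ', rfl, -⟩ := h
  exact hφ'.self_of_nhds

lemma add (h₁ : HasHessianAt φ₁ g₁ H₁ x) (h₂ : HasHessianAt φ₂ g₂ H₂ x) :
    HasHessianAt (fun y => φ₁ y + φ₂ y) (g₁ + g₂) (H₁ + H₂) x := by
  obtain ⟨φ₁', hφ₁, rfl, hH₁⟩ := h₁
  obtain ⟨φ₂', hφ₂, rfl, hH₂⟩ := h₂
  refine ⟨fun y => φ₁' y + φ₂' y, ?_, rfl, hH₁.add hH₂⟩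
  filter_upwards [hφ₁, hφ₂] with y hy₁ hy₂
  rw [hasGradientAt_iff_hasFDerivAt] at *
  rw [map_add]
  exact hy₁.add hy₂

lemma sub_const (h : HasHessianAt φ g H x) (c : ℝ) : HasHessianAt (fun y => φ y - c) g H x := by
  obtain ⟨φ', hφ', hg, hH⟩ := h
  refine ⟨φ', hφ'.mono fun y hy => ?_, hg, hH⟩
  rw [hasGradientAt_iff_hasFDerivAt] at *
  exact hy.sub_const c

lemma comp {F F' : ℝ → ℝ} {F'' : ℝ} (h : HasHessianAt φ g H x)
    (hF : ∀ᶠ r in 𝓝 (φ x), HasDerivAt F (F' r) r) (hF' : HasDerivAt F' F'' (φ x)) :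
    HasHessianAt (fun y => F (φ y)) (F' (φ x) • g) (F' (φ x) • H + F'' • rankOne ℝ g g) x := by
  have hφx := hasGradientAt_iff_hasFDerivAt.1 h.hasGradientAt
  obtain ⟨φ', hφ', rfl, hH⟩ := h
  refine ⟨fun y => F' (φ y) • φ' y, ?_, rfl, ?_⟩
  · filter_upwards [hφ', hφx.continuousAt.eventually hF] with y hy hFy
    rw [hasGradientAt_iff_hasFDerivAt] at *
    rw [map_smul]
    exact hFy.comp_hasFDerivAt y hy
  · refine ((hF'.comp_hasFDerivAt x hφx).smul hH).congr_fderiv ?_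
    ext v
    simp [rankOne_apply, mul_smul]

lemma const_mul (c : ℝ) (h : HasHessianAt φ g H x) :
    HasHessianAt (fun y => c * φ y) (c • g) (c • H) x := by
  simpa using h.comp (F := fun r => c * r) (F' := fun _ => c) (F'' := 0)
    (.of_forall fun r => by simpa using (hasDerivAt_id r).const_mul c) (hasDerivAt_const _ _)

lemma log (h : HasHessianAt φ g H x) (hφ : 0 < φ x) :
    HasHessianAt (fun y => Real.log (φ y)) ((φ x)⁻¹ • g)
      ((φ x)⁻¹ • H - ((φ x) ^ 2)⁻¹ • rankOne ℝ g g) x := by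
  simpa [sub_eq_add_neg] using h.comp
    ((eventually_gt_nhds hφ).mono fun r hr => Real.hasDerivAt_log hr.ne') (hasDerivAt_inv hφ.ne')

lemma norm_sq (x : E) :
    HasHessianAt (fun y => ‖y‖ ^ 2) ((2 : ℝ) • x) ((2 : ℝ) • ContinuousLinearMap.id ℝ E) x := by
  refine ⟨fun y => (2 : ℝ) • y, .of_forall fun y => ?_, rfl, (hasFDerivAt_id x).const_smul _⟩
  rw [hasGradientAt_iff_hasFDerivAt]
  refine (hasFDerivAt_id y).norm_sq.congr_fderiv ?_
  ext v
  simp [two_smul]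

lemma eq_zero_of_isLocalMax (h : HasHessianAt φ g H x) (hmax : IsLocalMax φ x) : g = 0 :=
  (LinearIsometryEquiv.map_eq_zero_iff _).1
    (hmax.hasFDerivAt_eq_zero (hasGradientAt_iff_hasFDerivAt.1 h.hasGradientAt))

lemma inner_nonpos_of_isLocalMax (h : HasHessianAt φ g H x) (hmax : IsLocalMax φ x) (v : E) :
    ⟪H v, v⟫ ≤ 0 := by
  obtain ⟨φ', hφ', -, hH⟩ := h
  have hline (s : ℝ) : HasDerivAt (fun s : ℝ => x + s • v) v s := by
    simpa using ((hasDerivAt_id s).smul_const v).const_add x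
  have htendsto : Tendsto (fun s : ℝ => x + s • v) (𝓝 0) (𝓝 x) := by
    simpa using (hline 0).continuousAt.tendsto
  have hx : x = x + (0 : ℝ) • v := by simp
  refine second_deriv_nonpos_of_isLocalMax (ψ := fun s => φ (x + s • v))
    (ψ' := fun s => ⟪φ' (x + s • v), v⟫) (s₀ := 0) ?_ ?_ ?_
  · simpa [IsLocalMax, IsMaxFilter] using htendsto.eventually hmax
  · filter_upwards [htendsto.eventually hφ'] with s hs
    exact (hasGradientAt_iff_hasFDerivAt.1 hs).comp_hasDerivAt s (hline s)
  · rw [hx] at hH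
    simpa using (hH.comp_hasDerivAt 0 (hline 0)).inner ℝ (hasDerivAt_const 0 v)

end HasHessianAt

end SecondOrderJets

section GraphMetric

variable {E : Type*} [NormedAddCommGroup E]

/-- The area element `W = √(1 + |p|²)` of a graph whose height function has gradient `p`. -/
def areaElement (p : E) : ℝ := √(1 + ‖p‖ ^ 2)

lemma areaElement_sq (p : E) : areaElement p ^ 2 = 1 + ‖p‖ ^ 2 := Real.sq_sqrt (by positivity)

lemma one_le_areaElement (p : E) : 1 ≤ areaElement p := Real.one_le_sqrt.2 (by simp)

lemma areaElement_pos (p : E) : 0 < areaElement p := zero_lt_one.trans_le (one_le_areaElement p)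

variable [InnerProductSpace ℝ E]

/-- The inverse `g⁻¹ = I - p ⊗ p / (1 + |p|²)` of the metric `g = I + p ⊗ p` which the ambient space
induces on a graph whose height function has gradient `p`. -/
def graphMetricInv (p : E) : E →L[ℝ] E :=
  ContinuousLinearMap.id ℝ E - (1 + ‖p‖ ^ 2)⁻¹ • rankOne ℝ p p

/-- The positive square root of `graphMetricInv p`. -/
def graphMetricInvSqrt (p : E) : E →L[ℝ] E :=
  ContinuousLinearMap.id ℝ E - (areaElement p * (areaElement p + 1))⁻¹ • rankOne ℝ p p

/-- The trace `tr (g⁻¹ A)` of the bilinear form `⟪A ·, ·⟫` with respect to the metric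
`g = I + p ⊗ p`. -/
def graphTrace (p : E) : (E →L[ℝ] E) →ₗ[ℝ] ℝ :=
  LinearMap.trace ℝ E ∘ₗ ContinuousLinearMap.coeLM ℝ ∘ₗ LinearMap.mulLeft ℝ (graphMetricInv p)

variable {p : E}

lemma inner_graphMetricInv (v w : E) :
    ⟪graphMetricInv p v, w⟫ = ⟪v, w⟫ - ⟪v, p⟫ * ⟪w, p⟫ / (1 + ‖p‖ ^ 2) := by
  simp only [graphMetricInv, sub_apply, smul_apply, ContinuousLinearMap.id_apply, rankOne_apply,
    inner_sub_left, real_inner_smul_left, real_inner_comm v p, real_inner_comm w p]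
  ring

lemma graphMetricInvSqrt_mul_self :
    graphMetricInvSqrt p * graphMetricInvSqrt p = graphMetricInv p := by
  have hp : ‖p‖ ^ 2 = areaElement p ^ 2 - 1 := by rw [areaElement_sq]; ring
  have hW := areaElement_pos p
  ext v
  simp only [graphMetricInvSqrt, graphMetricInv, mul_apply_eq_comp, sub_apply, smul_apply,
    ContinuousLinearMap.id_apply, rankOne_apply, inner_sub_right, real_inner_smul_right,
    real_inner_self_eq_norm_sq, hp]
  match_scalars
  · ring
  · field_simp
    ring

lemma isSymmetric_graphMetricInvSqrt : (graphMetricInvSqrt p : E →ₗ[ℝ] E).IsSymmetric := by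
  intro v w
  simp [graphMetricInvSqrt, inner_sub_left, inner_sub_right, real_inner_smul_left,
    real_inner_smul_right, real_inner_comm v p, mul_comm]

lemma graphTrace_eq_trace_conj (A : E →L[ℝ] E) :
    graphTrace p A =
      LinearMap.trace ℝ E ↑(graphMetricInvSqrt p * A * graphMetricInvSqrt p) := by
  simp only [graphTrace, LinearMap.comp_apply, LinearMap.mulLeft_apply,
    ContinuousLinearMap.coeLM_apply, ← graphMetricInvSqrt_mul_self,
    ContinuousLinearMap.toLinearMap_mul]
  rw [mul_assoc, LinearMap.trace_mul_comm]

variable [FiniteDimensional ℝ E]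

lemma graphTrace_eq (A : E →L[ℝ] E) :
    graphTrace p A = LinearMap.trace ℝ E A - ⟪A p, p⟫ / (1 + ‖p‖ ^ 2) := by
  have hcomm : LinearMap.trace ℝ E ↑(rankOne ℝ p p * A) = ⟪A p, p⟫ := by
    rw [ContinuousLinearMap.toLinearMap_mul, LinearMap.trace_mul_comm,
      ← ContinuousLinearMap.toLinearMap_mul, ContinuousLinearMap.mul_def,
      InnerProductSpace.comp_rankOne, InnerProductSpace.trace_rankOne, real_inner_comm]
  have hmul : graphMetricInv p * A = A - (1 + ‖p‖ ^ 2)⁻¹ • (rankOne ℝ p p * A) := by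
    rw [graphMetricInv, sub_mul, smul_mul_assoc]
    rfl
  simp only [graphTrace, LinearMap.comp_apply, LinearMap.mulLeft_apply, hmul, map_sub, map_smul,
    ContinuousLinearMap.coeLM_apply, hcomm, smul_eq_mul]
  ring

lemma graphTrace_id :
    graphTrace p (ContinuousLinearMap.id ℝ E) =
      Module.finrank ℝ E - ‖p‖ ^ 2 / (1 + ‖p‖ ^ 2) := by
  simp [graphTrace_eq]

lemma graphTrace_rankOne (v w : E) : graphTrace p (rankOne ℝ v w) = ⟪graphMetricInv p v, w⟫ := by
  rw [graphTrace_eq, InnerProductSpace.trace_rankOne, rankOne_apply, real_inner_smul_left,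
    inner_graphMetricInv, real_inner_comm v w, mul_comm ⟪w, p⟫]

lemma graphTrace_nonpos {A : E →L[ℝ] E} (hA : ∀ v, ⟪A v, v⟫ ≤ 0) : graphTrace p A ≤ 0 := by
  rw [graphTrace_eq_trace_conj, LinearMap.trace_eq_sum_inner _ (stdOrthonormalBasis ℝ E)]
  refine Finset.sum_nonpos fun i _ => ?_
  rw [real_inner_comm]
  exact (isSymmetric_graphMetricInvSqrt _ _).trans_le (hA _)

lemma sq_trace_le_finrank_mul_trace_mul_self {M : E →ₗ[ℝ] E} (hM : M.IsSymmetric) :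
    LinearMap.trace ℝ E M ^ 2 ≤ Module.finrank ℝ E * LinearMap.trace ℝ E (M * M) := by
  let e := stdOrthonormalBasis ℝ E
  rw [LinearMap.trace_eq_sum_inner M e, LinearMap.trace_eq_sum_inner (M * M) e]
  calc (∑ i, ⟪e i, M (e i)⟫) ^ 2 ≤ Module.finrank ℝ E * ∑ i, ⟪e i, M (e i)⟫ ^ 2 := by
        simpa using sq_sum_le_card_mul_sum_sq (s := Finset.univ) (f := fun i => ⟪e i, M (e i)⟫)
    _ ≤ Module.finrank ℝ E * ∑ i, ⟪e i, (M * M) (e i)⟫ := by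
        gcongr with i
        rw [Module.End.mul_apply, ← hM (e i) (M (e i)), real_inner_self_eq_norm_sq, ← sq_abs]
        gcongr
        simpa using abs_real_inner_le_norm (e i) (M (e i))

lemma sq_graphTrace_le {B : E →L[ℝ] E} (hB : (B : E →ₗ[ℝ] E).IsSymmetric) :
    graphTrace p B ^ 2 ≤ Module.finrank ℝ E *
      (graphTrace p (B * B) - ⟪graphMetricInv p (B p), B p⟫ / (1 + ‖p‖ ^ 2)) := by
  set R := graphMetricInvSqrt p
  have hR : (R : E →ₗ[ℝ] E).IsSymmetric := isSymmetric_graphMetricInvSqrt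
  have hRBR : ((R * B * R : E →L[ℝ] E) : E →ₗ[ℝ] E).IsSymmetric := fun v w =>
    (hR _ _).trans ((hB _ _).trans (hR _ _))
  have hsq : R * B * R * (R * B * R) = R * (B * graphMetricInv p * B) * R := by
    rw [← graphMetricInvSqrt_mul_self]
    noncomm_ring
  have hexpand : B * graphMetricInv p * B = B * B - (1 + ‖p‖ ^ 2)⁻¹ • rankOne ℝ (B p) (B p) := by
    ext v
    simp [graphMetricInv, rankOne_apply, show ⟪B p, v⟫ = ⟪p, B v⟫ from hB p v]
  calc graphTrace p B ^ 2
      ≤ Module.finrank ℝ E * LinearMap.trace ℝ E ↑(R * B * R * (R * B * R)) := by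
        rw [graphTrace_eq_trace_conj]
        exact sq_trace_le_finrank_mul_trace_mul_self hRBR
    _ = Module.finrank ℝ E * graphTrace p (B * graphMetricInv p * B) := by
        rw [hsq, graphTrace_eq_trace_conj]
    _ = _ := by
        rw [hexpand, map_sub, map_smul, graphTrace_rankOne, smul_eq_mul, inv_mul_eq_div]

end GraphMetric

section ThirdOrder

variable {E : Type*} [NormedAddCommGroup E] [InnerProductSpace ℝ E] [CompleteSpace E]
  {u : E → ℝ} {x : E}

/-- The Hessian of `u` at `x` as an operator: the derivative of the gradient field. -/
def hessian (u : E → ℝ) (x : E) : E →L[ℝ] E := fderiv ℝ (∇ u) x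

lemma contDiffAt_gradient {k m : WithTop ℕ∞} (hu : ContDiffAt ℝ k u x) (hmk : m + 1 ≤ k) :
    ContDiffAt ℝ m (∇ u) x :=
  (InnerProductSpace.toDual ℝ E).symm.contDiff.contDiffAt.comp x (hu.fderiv_right hmk)

lemma contDiffAt_hessian (hu : ContDiffAt ℝ 3 u x) : ContDiffAt ℝ 1 (hessian u) x :=
  (contDiffAt_gradient (m := 2) hu (by norm_num)).fderiv_right (by norm_num)

lemma hasFDerivAt_gradient (hu : ContDiffAt ℝ 2 u x) : HasFDerivAt (∇ u) (hessian u x) x :=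
  ((contDiffAt_gradient (m := 1) hu (by norm_num)).differentiableAt (by norm_num)).hasFDerivAt

lemma hasFDerivAt_hessian (hu : ContDiffAt ℝ 3 u x) :
    HasFDerivAt (hessian u) (fderiv ℝ (hessian u) x) x :=
  ((contDiffAt_hessian hu).differentiableAt (by norm_num)).hasFDerivAt

lemma hasHessianAt_of_contDiffAt (hu : ContDiffAt ℝ 2 u x) :
    HasHessianAt u (∇ u x) (hessian u x) x :=
  ⟨∇ u, (hu.eventually (by norm_num)).mono fun _ hy =>
    (hy.differentiableAt (by norm_num)).hasGradientAt, rfl, hasFDerivAt_gradient hu⟩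

lemma isSymmetric_hessian (hu : ContDiffAt ℝ 2 u x) :
    (hessian u x : E →ₗ[ℝ] E).IsSymmetric := by
  have hfderiv : HasFDerivAt (fderiv ℝ u) (fderiv ℝ (fderiv ℝ u) x) x :=
    ((hu.fderiv_right (m := 1) (by norm_num)).differentiableAt (by norm_num)).hasFDerivAt
  have hinner (v w : E) : ⟪hessian u x v, w⟫ = fderiv ℝ (fderiv ℝ u) x v w := by
    have h := (hasFDerivAt_gradient hu).inner ℝ (hasFDerivAt_const w x)
    simp only [inner_gradient_left] at h
    simpa using DFunLike.congr_fun (h.unique (hfderiv.clm_apply (hasFDerivAt_const w x))) v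
  intro v w
  rw [ContinuousLinearMap.coe_coe, hinner, ← real_inner_comm, hinner]
  exact hu.isSymmSndFDerivAt (by simp) v w

lemma fderiv_hessian_apply_comm (hu : ContDiffAt ℝ 3 u x) (v w : E) :
    fderiv ℝ (hessian u) x v w = fderiv ℝ (hessian u) x w v :=
  (contDiffAt_gradient (m := 2) hu (by norm_num)).isSymmSndFDerivAt (by simp) v w

lemma hasHessianAt_areaElement_gradient_sq (hu : ContDiffAt ℝ 3 u x) :
    HasHessianAt (fun y => areaElement (∇ u y) ^ 2) ((2 : ℝ) • hessian u x (∇ u x))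
      ((2 : ℝ) • (fderiv ℝ (hessian u) x (∇ u x) + hessian u x * hessian u x)) x := by
  have hu2 : ContDiffAt ℝ 2 u x := hu.of_le (by norm_num)
  simp only [areaElement_sq]
  refine ⟨fun y => (2 : ℝ) • hessian u y (∇ u y), ?_, rfl, ?_⟩
  · filter_upwards [hu2.eventually (by norm_num)] with y hy
    rw [hasGradientAt_iff_hasFDerivAt]
    refine ((hasFDerivAt_gradient hy).norm_sq.const_add 1).congr_fderiv ?_
    ext v
    simpa using (isSymmetric_hessian hy (∇ u y) v).symm
  · refine (((hasFDerivAt_hessian hu).clm_apply (hasFDerivAt_gradient hu2)).const_smul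
      (2 : ℝ)).congr_fderiv ?_
    ext v
    simp [fderiv_hessian_apply_comm hu v, add_comm]

lemma hasHessianAt_log_areaElement_gradient (hu : ContDiffAt ℝ 3 u x) :
    HasHessianAt (fun y => Real.log (areaElement (∇ u y)))
      ((1 + ‖∇ u x‖ ^ 2)⁻¹ • hessian u x (∇ u x))
      ((1 + ‖∇ u x‖ ^ 2)⁻¹ • (fderiv ℝ (hessian u) x (∇ u x) + hessian u x * hessian u x)
        - (2 * ((1 + ‖∇ u x‖ ^ 2) ^ 2)⁻¹) •
          rankOne ℝ (hessian u x (∇ u x)) (hessian u x (∇ u x))) x := by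
  have h := ((hasHessianAt_areaElement_gradient_sq hu).log
    (pow_pos (areaElement_pos _) 2)).const_mul (1 / 2)
  convert h using 1
  · ext y
    simp
  · rw [areaElement_sq]
    module
  · ext v
    simp only [smul_add, sub_apply, add_apply, smul_apply, mul_apply_eq_comp, rankOne_apply,
      one_div, areaElement_sq, map_smul]
    module

end ThirdOrder

section MeanCurvature

variable {E : Type*} [NormedAddCommGroup E] [InnerProductSpace ℝ E]

lemma hasFDerivAt_areaElement (p : E) :
    HasFDerivAt areaElement ((areaElement p)⁻¹ • innerSL ℝ p) p := by
  refine (((hasFDerivAt_id p).norm_sq.const_add 1).sqrt (by positivity)).congr_fderiv ?_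
  ext v
  simp [areaElement, mul_assoc]

lemma hasFDerivAt_inv_areaElement_smul (p : E) :
    HasFDerivAt (fun q : E => (areaElement q)⁻¹ • q) ((areaElement p)⁻¹ • graphMetricInv p) p := by
  refine (((hasDerivAt_inv (areaElement_pos p).ne').comp_hasFDerivAt p
    (hasFDerivAt_areaElement p)).smul (hasFDerivAt_id p)).congr_fderiv ?_
  ext v
  simp only [graphMetricInv, ← areaElement_sq, Function.comp_apply, neg_smul, id_eq, add_apply,
    smul_apply, sub_apply, neg_apply, ContinuousLinearMap.id_apply,
    ContinuousLinearMap.smulRight_apply, coe_innerSL_apply, rankOne_apply, smul_eq_mul]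
  module

lemma hasDerivAt_graphTrace [FiniteDimensional ℝ E] {p : ℝ → E} {p' : E} {A : ℝ → E →L[ℝ] E}
    {A' : E →L[ℝ] E} {s : ℝ} (hp : HasDerivAt p p' s) (hA : HasDerivAt A A' s)
    (hsymm : (A s : E →ₗ[ℝ] E).IsSymmetric) :
    HasDerivAt (fun r => graphTrace (p r) (A r))
      (graphTrace (p s) A' - 2 * (⟪graphMetricInv (p s) (A s (p s)), p'⟫ / (1 + ‖p s‖ ^ 2))) s := by
  simp only [graphTrace_eq, inner_graphMetricInv]
  have htr : HasDerivAt (fun r => LinearMap.trace ℝ E (A r)) (LinearMap.trace ℝ E A') s :=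
    (LinearMap.toContinuousLinearMap
      (LinearMap.trace ℝ E ∘ₗ ContinuousLinearMap.coeLM ℝ)).hasFDerivAt.comp_hasDerivAt s hA
  have hquad := ((hA.clm_apply hp).inner ℝ hp).div (hp.norm_sq.const_add 1) (by positivity)
  have hA_symm : ⟪A s p', p s⟫ = ⟪A s (p s), p'⟫ := (hsymm _ _).trans (real_inner_comm _ _)
  refine (htr.sub hquad).congr_deriv ?_
  rw [inner_add_left, hA_symm, real_inner_comm (p s) p']
  field_simp
  ring

variable [CompleteSpace E]

/-- The mean curvature operator `M[u] = div (∇u / √(1 + |∇u|²))`. -/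
def meanCurvature (u : E → ℝ) (x : E) : ℝ :=
  LinearMap.trace ℝ E ↑(fderiv ℝ (fun y => (areaElement (∇ u y))⁻¹ • ∇ u y) x)

lemma meanCurv_eq_meanCurvature (u : EuclideanSpace ℝ (Fin n) → ℝ) (x : EuclideanSpace ℝ (Fin n)) :
    meanCurv u x = meanCurvature u x := by
  rw [meanCurvature, LinearMap.trace_eq_sum_inner _ (EuclideanSpace.basisFun (Fin n) ℝ)]
  simp [meanCurv, areaElement, real_inner_comm]

lemma meanCurvature_eq_graphTrace {u : E → ℝ} {x : E} (hu : ContDiffAt ℝ 2 u x) :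
    meanCurvature u x = (areaElement (∇ u x))⁻¹ * graphTrace (∇ u x) (hessian u x) := by
  have hN : HasFDerivAt (fun y => (areaElement (∇ u y))⁻¹ • ∇ u y) _ x :=
    (hasFDerivAt_inv_areaElement_smul (∇ u x)).comp x (hasFDerivAt_gradient hu)
  rw [meanCurvature, hN.fderiv, ContinuousLinearMap.smul_comp, ContinuousLinearMap.toLinearMap_smul,
    map_smul, smul_eq_mul]
  rfl

end MeanCurvature

section PrescribedMeanCurvature

variable {E : Type*} [NormedAddCommGroup E] [InnerProductSpace ℝ E] [FiniteDimensional ℝ E]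
  {f : ℝ → ℝ} {u : E → ℝ} {x : E}

lemma graphTrace_hessian_eq (hu : ContDiffAt ℝ 2 u x) {c : ℝ} (hc : meanCurvature u x + c = 0) :
    graphTrace (∇ u x) (hessian u x) = -(c * areaElement (∇ u x)) := by
  have hW := areaElement_pos (∇ u x)
  rw [meanCurvature_eq_graphTrace hu, ← eq_neg_iff_add_eq_zero] at hc
  field_simp at hc
  linarith

lemma graphTrace_fderiv_hessian (hu : ContDiffAt ℝ 3 u x) (hf : DifferentiableAt ℝ f (u x))
    (heq : ∀ᶠ y in 𝓝 x, meanCurvature u y + f (u y) = 0) (v : E) :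
    graphTrace (∇ u x) (fderiv ℝ (hessian u) x v) =
      2 * (⟪graphMetricInv (∇ u x) (hessian u x (∇ u x)), hessian u x v⟫ / (1 + ‖∇ u x‖ ^ 2))
        - deriv f (u x) * ⟪∇ u x, v⟫ * areaElement (∇ u x)
        - f (u x) * (⟪∇ u x, hessian u x v⟫ / areaElement (∇ u x)) := by
  have hu2 : ContDiffAt ℝ 2 u x := hu.of_le (by norm_num)
  have htendsto : Tendsto (fun s : ℝ => x + s • v) (𝓝 0) (𝓝 x) :=
    Continuous.tendsto' (by fun_prop) _ _ (by simp)
  have hgrad := hasFDerivAt_gradient hu2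
  have hlhs := hasDerivAt_graphTrace (hgrad.hasLineDerivAt v)
    ((hasFDerivAt_hessian hu).hasLineDerivAt v) (by simpa using isSymmetric_hessian hu2)
  have hfu := (hf.hasDerivAt.comp_hasFDerivAt x
    (hu.differentiableAt (by norm_num)).hasFDerivAt).hasLineDerivAt v
  have hW := ((hasFDerivAt_areaElement (∇ u x)).comp x hgrad).hasLineDerivAt v
  have hev : (fun s : ℝ => graphTrace (∇ u (x + s • v)) (hessian u (x + s • v))) =ᶠ[𝓝 0]
      fun s => -(f (u (x + s • v)) * areaElement (∇ u (x + s • v))) := by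
    filter_upwards [htendsto.eventually heq, htendsto.eventually (hu2.eventually (by norm_num))]
      with s hs hus using graphTrace_hessian_eq hus hs
  have h := hlhs.unique ((HasDerivAt.mul hfu hW).neg.congr_of_eventuallyEq hev)
  simp only [zero_smul, add_zero, Function.comp_apply, ContinuousLinearMap.comp_apply, smul_apply,
    innerSL_apply_apply, smul_eq_mul, ← inner_gradient_left (f := u)] at h
  rw [div_eq_inv_mul ⟪∇ u x, hessian u x v⟫]
  linarith

lemma bochner_inequality [Nontrivial E] (hu : ContDiffAt ℝ 3 u x) (hf : DifferentiableAt ℝ f (u x))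
    (hf' : deriv f (u x) ≤ 0) (heq : ∀ᶠ y in 𝓝 x, meanCurvature u y + f (u y) = 0) :
    f (u x) ^ 2 * (1 + ‖∇ u x‖ ^ 2) / Module.finrank ℝ E
        - f (u x) * (⟪hessian u x (∇ u x), ∇ u x⟫ / areaElement (∇ u x))
        + 3 * (⟪graphMetricInv (∇ u x) (hessian u x (∇ u x)), hessian u x (∇ u x)⟫
          / (1 + ‖∇ u x‖ ^ 2))
      ≤ graphTrace (∇ u x) (fderiv ℝ (hessian u) x (∇ u x) + hessian u x * hessian u x) := by
  have hu2 : ContDiffAt ℝ 2 u x := hu.of_le (by norm_num)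
  have hn : (0 : ℝ) < Module.finrank ℝ E := by exact_mod_cast Module.finrank_pos
  have hsq := sq_graphTrace_le (p := ∇ u x) (isSymmetric_hessian hu2)
  rw [graphTrace_hessian_eq hu2 heq.self_of_nhds, neg_sq, mul_pow, areaElement_sq,
    ← div_le_iff₀' hn] at hsq
  have hdrop : deriv f (u x) * ⟪∇ u x, ∇ u x⟫ * areaElement (∇ u x) ≤ 0 :=
    mul_nonpos_of_nonpos_of_nonneg (mul_nonpos_of_nonpos_of_nonneg hf' real_inner_self_nonneg)
      (areaElement_pos _).le
  rw [map_add, graphTrace_fderiv_hessian hu hf heq, real_inner_comm (∇ u x) (hessian u x (∇ u x))]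
  linarith

lemma interior_max_inequality [Nontrivial E] {η : E → ℝ} {g : E} {H : E →L[ℝ] E}
    (hu : ContDiffAt ℝ 3 u x) (hf : DifferentiableAt ℝ f (u x)) (hf' : deriv f (u x) ≤ 0)
    (heq : ∀ᶠ y in 𝓝 x, meanCurvature u y + f (u y) = 0) (hη : HasHessianAt η g H x)
    (hpos : 0 < η x) (hmax : IsLocalMax (fun y => areaElement (∇ u y) * η y) x) :
    η x * f (u x) ^ 2 / Module.finrank ℝ E + f (u x) * ⟪g, ∇ u x⟫ / areaElement (∇ u x)
      + graphTrace (∇ u x) H ≤ 0 := by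
  have hlog := (hasHessianAt_log_areaElement_gradient hu).add (hη.log hpos)
  have hlogmax : IsLocalMax (fun y => Real.log (areaElement (∇ u y)) + Real.log (η y)) x := by
    filter_upwards [hmax, hη.hasGradientAt.continuousAt.eventually (lt_mem_nhds hpos)] with y hy hηy
    have hW := areaElement_pos (∇ u y)
    have hWx := areaElement_pos (∇ u x)
    rw [← Real.log_mul hW.ne' hηy.ne', ← Real.log_mul hWx.ne' hpos.ne']
    exact Real.log_le_log (by positivity) hy
  have hQ : 0 < 1 + ‖∇ u x‖ ^ 2 := by positivity
  have hcrit : hessian u x (∇ u x) = -((1 + ‖∇ u x‖ ^ 2) / η x) • g := by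
    have h := congrArg ((1 + ‖∇ u x‖ ^ 2) • ·) (hlog.eq_zero_of_isLocalMax hlogmax)
    simp only [smul_add, smul_smul, mul_inv_cancel₀ hQ.ne', one_smul, smul_zero,
      ← div_eq_mul_inv] at h
    rw [neg_smul]
    exact eq_neg_of_add_eq_zero_left h
  have htrace := graphTrace_nonpos (p := ∇ u x) (hlog.inner_nonpos_of_isLocalMax hlogmax)
  have hbochner := bochner_inequality hu hf hf' heq
  simp only [map_add, map_sub, map_smul, smul_eq_mul, graphTrace_rankOne] at htrace hbochner
  simp only [hcrit, map_smul, real_inner_smul_left, real_inner_smul_right] at htrace hbochner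
  linear_combination (norm := skip) η x / (1 + ‖∇ u x‖ ^ 2) * hbochner + η x * htrace
  refine le_of_eq ?_
  field_simp
  ring

end PrescribedMeanCurvature

section Barrier

lemma neg_sq_div_le_quadratic {c n t A θ W : ℝ} (hn : 0 < n) (hA : 0 < A) (hθ : 0 < θ)
    (hW : 0 < W) (hle : W ^ 2 ≤ A ^ 2 * θ) :
    -(n / 4 * (t ^ 2 / W ^ 2)) ≤ θ * c ^ 2 / n + t * c / A := calc
  -(n / 4 * (t ^ 2 / W ^ 2)) ≤ -(n / 4 * (t ^ 2 / (A ^ 2 * θ))) := by gcongr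
  _ ≤ -(n / 4 * (t ^ 2 / (A ^ 2 * θ))) + θ / n * (c + n * t / (2 * θ * A)) ^ 2 :=
    le_add_of_nonneg_right (by positivity)
  _ = θ * c ^ 2 / n + t * c / A := by
    field_simp
    ring

section ExpWeight

variable {E : Type*} [NormedAddCommGroup E] {u : E → ℝ} {x : E} {b t ε : ℝ}

/-- The weight `e^{-t(u - b) - ε|x|²}`. For `t, ε > 0` it is at most `1` on `{b ≤ u}` and decays at
infinity there, so that subtracting `τ > 0` gives a cut-off with bounded positivity set. -/
def expWeight (u : E → ℝ) (b t ε : ℝ) (x : E) : ℝ := Real.exp (-(t * (u x - b) + ε * ‖x‖ ^ 2))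

lemma expWeight_pos : 0 < expWeight u b t ε x := Real.exp_pos _

lemma expWeight_le_one (ht : 0 ≤ t) (hε : 0 ≤ ε) (hb : b ≤ u x) : expWeight u b t ε x ≤ 1 := by
  have hu := mul_nonneg ht (sub_nonneg.2 hb)
  exact Real.exp_le_one_iff.2 (neg_nonpos.2 (add_nonneg hu (by positivity)))

lemma le_expWeight_iff {τ : ℝ} (hτ : 0 < τ) :
    τ ≤ expWeight u b t ε x ↔ t * (u x - b) + ε * ‖x‖ ^ 2 ≤ -Real.log τ := by
  rw [expWeight, ← Real.log_le_iff_le_exp hτ, le_neg]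

lemma le_add_of_le_expWeight {τ : ℝ} (ht : 0 < t) (hε : 0 ≤ ε) (hτ : 0 < τ)
    (h : τ ≤ expWeight u b t ε x) : u x ≤ b + -Real.log τ / t := by
  have hle := (le_expWeight_iff hτ).1 h
  have hx : 0 ≤ ε * ‖x‖ ^ 2 := by positivity
  rw [← sub_le_iff_le_add', le_div_iff₀' ht]
  linarith

lemma mul_norm_le_sqrt_of_le_expWeight {τ : ℝ} (ht : 0 ≤ t) (hε : 0 ≤ ε) (hτ : 0 < τ)
    (hb : b ≤ u x) (h : τ ≤ expWeight u b t ε x) : ε * ‖x‖ ≤ √(ε * -Real.log τ) := by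
  have hle := (le_expWeight_iff hτ).1 h
  have hux := mul_nonneg ht (sub_nonneg.2 hb)
  refine Real.le_sqrt_of_sq_le ?_
  rw [mul_pow, sq ε, mul_assoc]
  gcongr
  linarith

lemma continuousOn_expWeight {s : Set E} (hu : ContinuousOn u s) :
    ContinuousOn (expWeight u b t ε) s := by
  unfold expWeight
  fun_prop

lemma isCompact_closure_inter_le_expWeight [ProperSpace E] {Ω : Set E} {τ : ℝ}
    (hu : ContinuousOn u (closure Ω)) (hb : ∀ y ∈ closure Ω, b ≤ u y) (ht : 0 ≤ t) (hε : 0 < ε)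
    (hτ : 0 < τ) : IsCompact (closure Ω ∩ expWeight u b t ε ⁻¹' Ici τ) := by
  refine isCompact_of_isClosed_isBounded ((continuousOn_expWeight hu).preimage_isClosed_of_isClosed
    isClosed_closure isClosed_Ici) (isBounded_closedBall (x := (0 : E))
    (r := √(ε * -Real.log τ) / ε) |>.subset ?_)
  rintro y ⟨hy, hτy⟩
  rw [mem_closedBall_zero_iff, le_div_iff₀' hε]
  exact mul_norm_le_sqrt_of_le_expWeight ht hε.le hτ (hb y hy) hτy

end ExpWeight

variable {E : Type*} [NormedAddCommGroup E] [InnerProductSpace ℝ E]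
  {f : ℝ → ℝ} {u : E → ℝ} {x : E} {b t ε τ : ℝ}

lemma inner_graphMetricInv_self_nonneg (p v : E) : 0 ≤ ⟪graphMetricInv p v, v⟫ := by
  have hcs := real_inner_mul_inner_self_le v p
  rw [inner_graphMetricInv, sub_nonneg, div_le_iff₀ (by positivity)]
  rw [real_inner_self_eq_norm_sq p] at hcs
  linarith [real_inner_self_nonneg (x := v)]

lemma le_inner_graphMetricInv_smul_add (p v : E) (hε : 0 ≤ ε) (ht : 0 ≤ t) :
    t ^ 2 * (1 - (1 + ‖p‖ ^ 2)⁻¹) - 4 * t * (ε * ‖v‖)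
      ≤ ⟪graphMetricInv p (t • p + (2 * ε) • v), t • p + (2 * ε) • v⟫ := by
  have hexpand : ⟪graphMetricInv p (t • p + (2 * ε) • v), t • p + (2 * ε) • v⟫ =
      t ^ 2 * (1 - (1 + ‖p‖ ^ 2)⁻¹) + 4 * t * (ε * (⟪v, p⟫ / (1 + ‖p‖ ^ 2)))
        + 4 * ε ^ 2 * ⟪graphMetricInv p v, v⟫ := by
    simp only [inner_graphMetricInv, inner_add_left, inner_add_right, real_inner_smul_left,
      real_inner_smul_right, real_inner_self_eq_norm_sq p, real_inner_comm v p]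
    field_simp
    ring
  have hcross : -‖v‖ ≤ ⟪v, p⟫ / (1 + ‖p‖ ^ 2) := by
    rw [le_div_iff₀ (by positivity)]
    have hcs := neg_le_of_abs_le (abs_real_inner_le_norm v p)
    nlinarith [mul_nonneg (norm_nonneg v) (sq_nonneg (‖p‖ - 1)),
      mul_nonneg (norm_nonneg v) (sq_nonneg ‖p‖), norm_nonneg v]
  have hremainder : 0 ≤ 4 * ε ^ 2 * ⟪graphMetricInv p v, v⟫ :=
    mul_nonneg (by positivity) (inner_graphMetricInv_self_nonneg p v)
  rw [hexpand]
  linear_combination hremainder + 4 * t * ε * hcross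

variable [FiniteDimensional ℝ E]

lemma hasHessianAt_expWeight_sub (hu : ContDiffAt ℝ 2 u x) :
    HasHessianAt (fun y => expWeight u b t ε y - τ)
      (-expWeight u b t ε x • (t • ∇ u x + (2 * ε) • x))
      (expWeight u b t ε x • (rankOne ℝ (t • ∇ u x + (2 * ε) • x) (t • ∇ u x + (2 * ε) • x)
        - (t • hessian u x + (2 * ε) • ContinuousLinearMap.id ℝ E))) x := by
  have hψ := (((hasHessianAt_of_contDiffAt hu).sub_const b).const_mul t).add
    ((HasHessianAt.norm_sq x).const_mul ε)
  have hexp (r : ℝ) : HasDerivAt (fun r => Real.exp (-r)) (-Real.exp (-r)) r := by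
    simpa using (hasDerivAt_neg r).exp
  have hexp' (r : ℝ) : HasDerivAt (fun r => -Real.exp (-r)) (Real.exp (-r)) r := by
    simpa using (hexp r).fun_neg
  have h := (hψ.comp (.of_forall hexp) (hexp' _)).sub_const τ
  simp only [smul_smul, mul_comm ε 2] at h
  unfold expWeight
  convert h using 1
  module

lemma barrier_inequality [Nontrivial E] (hu : ContDiffAt ℝ 3 u x)
    (hf : DifferentiableAt ℝ f (u x)) (hf' : deriv f (u x) ≤ 0)
    (heq : ∀ᶠ y in 𝓝 x, meanCurvature u y + f (u y) = 0) (hτ : τ < expWeight u b t ε x)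
    (hmax : IsLocalMax (fun y => areaElement (∇ u y) * (expWeight u b t ε y - τ)) x) :
    (1 - τ / expWeight u b t ε x) * f (u x) ^ 2 / Module.finrank ℝ E
        + t * f (u x) / areaElement (∇ u x)
        + ⟪graphMetricInv (∇ u x) (t • ∇ u x + (2 * ε) • x), t • ∇ u x + (2 * ε) • x⟫
      ≤ 2 * ε * (f (u x) * ⟪x, ∇ u x⟫ / areaElement (∇ u x) + Module.finrank ℝ E
        - ‖∇ u x‖ ^ 2 / (1 + ‖∇ u x‖ ^ 2)) := by
  have hu2 : ContDiffAt ℝ 2 u x := hu.of_le (by norm_num)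
  have hη := hasHessianAt_expWeight_sub (b := b) (t := t) (ε := ε) (τ := τ) hu2
  have h := interior_max_inequality hu hf hf' heq hη (sub_pos.2 hτ) hmax
  have hwp : ⟪t • ∇ u x + (2 * ε) • x, ∇ u x⟫ = t * ‖∇ u x‖ ^ 2 + 2 * ε * ⟪x, ∇ u x⟫ := by
    rw [inner_add_left, real_inner_smul_left, real_inner_smul_left, real_inner_self_eq_norm_sq]
  generalize t • ∇ u x + (2 * ε) • x = w at h hwp ⊢
  simp only [map_sub, map_add, map_smul, graphTrace_rankOne, graphTrace_id, smul_eq_mul,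
    graphTrace_hessian_eq hu2 heq.self_of_nhds, real_inner_smul_left, hwp] at h
  have hw := expWeight_pos (u := u) (x := x) (b := b) (t := t) (ε := ε)
  have hW := areaElement_pos (∇ u x)
  have hnorm : ‖∇ u x‖ ^ 2 = areaElement (∇ u x) ^ 2 - 1 := by rw [areaElement_sq]; ring
  linear_combination (norm := skip) (expWeight u b t ε x)⁻¹ * h
  refine le_of_eq ?_
  rw [hnorm]
  field_simp
  ring

lemma barrier_estimate [Nontrivial E] (hu : ContDiffAt ℝ 3 u x)
    (hf : DifferentiableAt ℝ f (u x)) (hf' : deriv f (u x) ≤ 0)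
    (heq : ∀ᶠ y in 𝓝 x, meanCurvature u y + f (u y) = 0) (hτ : τ < expWeight u b t ε x)
    (hmax : IsLocalMax (fun y => areaElement (∇ u y) * (expWeight u b t ε y - τ)) x)
    (ht : 0 ≤ t) (hε : 0 ≤ ε) {C : ℝ} (hC : |f (u x)| ≤ C) :
    (1 - τ / expWeight u b t ε x) * f (u x) ^ 2 / Module.finrank ℝ E
        + t * f (u x) / areaElement (∇ u x) + t ^ 2 * (1 - (1 + ‖∇ u x‖ ^ 2)⁻¹)
      ≤ 2 * (C + 2 * t) * (ε * ‖x‖) + 2 * ε * Module.finrank ℝ E := by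
  have hbarrier := barrier_inequality hu hf hf' heq hτ hmax
  have hmetric := le_inner_graphMetricInv_smul_add (∇ u x) x hε ht
  have hW := areaElement_pos (∇ u x)
  have hcross : f (u x) * ⟪x, ∇ u x⟫ / areaElement (∇ u x) ≤ C * ‖x‖ := by
    rw [div_le_iff₀ hW, mul_assoc]
    have hnorm : ‖∇ u x‖ ≤ areaElement (∇ u x) :=
      Real.le_sqrt_of_sq_le (by linarith)
    calc f (u x) * ⟪x, ∇ u x⟫ ≤ |f (u x)| * |⟪x, ∇ u x⟫| := by
          rw [← abs_mul]; exact le_abs_self _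
      _ ≤ C * (‖x‖ * areaElement (∇ u x)) := by
          have hcs := abs_real_inner_le_norm x (∇ u x)
          have hC0 := (abs_nonneg _).trans hC
          gcongr
          exact hcs.trans (by gcongr)
  have hdrop : 0 ≤ ‖∇ u x‖ ^ 2 / (1 + ‖∇ u x‖ ^ 2) := by positivity
  linear_combination hbarrier + hmetric + 2 * ε * hcross + 2 * ε * hdrop

lemma sq_mul_le_of_isLocalMax [Nontrivial E] (hu : ContDiffAt ℝ 3 u x)
    (hf : DifferentiableAt ℝ f (u x)) (hf' : deriv f (u x) ≤ 0)
    (heq : ∀ᶠ y in 𝓝 x, meanCurvature u y + f (u y) = 0) (hτ : 0 < τ)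
    (hmax : IsLocalMax (fun y => areaElement (∇ u y) * (expWeight u b t ε y - τ)) x)
    (ht : 0 ≤ t) (hε : 0 ≤ ε) {C : ℝ} (hC : |f (u x)| ≤ C) (hb : b ≤ u x) {W : ℝ} (hW : 0 < W)
    (hWx : W ≤ areaElement (∇ u x) * (expWeight u b t ε x - τ)) :
    t ^ 2 * (1 - (1 + Module.finrank ℝ E / 4) / W ^ 2)
      ≤ 2 * (C + 2 * t) * (ε * ‖x‖) + 2 * ε * Module.finrank ℝ E := by
  have hA := areaElement_pos (∇ u x)
  have hη := expWeight_pos (u := u) (x := x) (b := b) (t := t) (ε := ε)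
  have hητ : 0 < expWeight u b t ε x - τ := pos_of_mul_pos_right (hW.trans_le hWx) hA.le
  have hbarrier := barrier_estimate hu hf hf' heq (sub_pos.1 hητ) hmax ht hε hC
  set θ := 1 - τ / expWeight u b t ε x with hθdef
  have hsub : expWeight u b t ε x - τ = θ * expWeight u b t ε x := by
    rw [hθdef, sub_mul, one_mul, div_mul_cancel₀ _ hη.ne']
  have hθ : 0 < θ := pos_of_mul_pos_left (hsub ▸ hητ) hη.le
  have hθ1 : θ ≤ 1 := sub_le_self _ (by positivity)
  have hWθ : W ≤ areaElement (∇ u x) * θ := by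
    rw [hsub, ← mul_assoc] at hWx
    exact hWx.trans (mul_le_of_le_one_right (by positivity) (expWeight_le_one ht hε hb))
  have hWθsq : W ^ 2 ≤ areaElement (∇ u x) ^ 2 * θ := calc
    W ^ 2 ≤ (areaElement (∇ u x) * θ) ^ 2 := by gcongr
    _ = areaElement (∇ u x) ^ 2 * θ * θ := by ring
    _ ≤ areaElement (∇ u x) ^ 2 * θ := mul_le_of_le_one_right (by positivity) hθ1
  have hn : (0 : ℝ) < Module.finrank ℝ E := by exact_mod_cast Module.finrank_pos
  have hsquare := neg_sq_div_le_quadratic (c := f (u x)) (n := Module.finrank ℝ E) (t := t) hn hA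
    hθ hW hWθsq
  have hinv : (areaElement (∇ u x) ^ 2)⁻¹ ≤ (W ^ 2)⁻¹ :=
    inv_anti₀ (by positivity) (hWθsq.trans (mul_le_of_le_one_right (by positivity) hθ1))
  rw [← areaElement_sq] at hbarrier
  linear_combination hbarrier + hsquare + t ^ 2 * hinv

end Barrier

section GradientEstimate

lemma sqrt_div_two_le_sqrt_div_two (r : ℝ) : √r / 2 ≤ √(r / 2) := by
  rw [Real.sqrt_div' r zero_le_two]
  gcongr
  exact Real.sqrt_le_iff.2 ⟨by norm_num, by norm_num⟩

lemma exists_barrier_parameters {E : Type*} [NormedAddCommGroup E] {f : ℝ → ℝ}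
    (hf : Continuous f) (u : E → ℝ) (b : ℝ) (x₀ : E) (N : ℝ) {W W₀ δ : ℝ} (hW : W < W₀)
    (hδ : 0 < δ) :
    ∃ t τ ε C : ℝ, 0 < t ∧ 0 < τ ∧ 0 < ε ∧ (∀ s ∈ Icc b (b + -Real.log τ / t), |f s| ≤ C) ∧
      W < W₀ * (expWeight u b t ε x₀ - τ) ∧
      2 * (C + 2 * t) * √(ε * -Real.log τ) + 2 * ε * N < t ^ 2 * δ := by
  unfold expWeight
  obtain ⟨t, ht, htW⟩ := ((Continuous.tendsto'
    (f := fun t => W₀ * Real.exp (-(t * (u x₀ - b)))) (by fun_prop) 0 W₀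
    (by simp)).eventually_const_lt hW).exists_gt
  obtain ⟨τ, hτ, hτW⟩ := ((Continuous.tendsto'
    (f := fun τ => W₀ * (Real.exp (-(t * (u x₀ - b))) - τ)) (by fun_prop) 0 _
    (by rw [sub_zero])).eventually_const_lt htW).exists_gt
  obtain ⟨C, hC⟩ := isCompact_Icc.exists_bound_of_continuousOn
    (hf.continuousOn (s := Icc b (b + -Real.log τ / t)))
  have hstart := (Continuous.tendsto'
    (f := fun ε => W₀ * (Real.exp (-(t * (u x₀ - b) + ε * ‖x₀‖ ^ 2)) - τ)) (by fun_prop) 0 _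
    (by rw [zero_mul, add_zero])).eventually_const_lt hτW
  have herror := (Continuous.tendsto'
    (f := fun ε => 2 * (C + 2 * t) * √(ε * -Real.log τ) + 2 * ε * N) (by fun_prop) 0 0
    (by simp)).eventually_lt_const (show 0 < t ^ 2 * δ by positivity)
  obtain ⟨ε, hε, hεW, hεδ⟩ := (hstart.and herror).exists_gt
  exact ⟨t, τ, ε, C, ht, hτ, hε, hC, hεW, hεδ⟩

variable {E : Type*} [NormedAddCommGroup E] [InnerProductSpace ℝ E] [FiniteDimensional ℝ E]
  {Ω : Set E} {f : ℝ → ℝ} {u : E → ℝ} {Du : E → E} {b t τ ε : ℝ}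

lemma exists_isLocalMax_areaElement_mul_expWeight (hΩ : IsOpen Ω)
    (hu : ContinuousOn u (closure Ω)) (hDu : ∀ x ∈ Ω, Du x = ∇ u x)
    (hDuc : ContinuousOn Du (closure Ω)) (hb : ∀ x ∈ closure Ω, b ≤ u x) (ht : 0 ≤ t) (hε : 0 < ε)
    (hτ : 0 < τ) {W : ℝ} (hW : 0 ≤ W)
    (hfrontier : ∀ x ∈ frontier Ω, areaElement (Du x) ≤ W) {x₀ : E} (hx₀ : x₀ ∈ Ω)
    (hWx₀ : W < areaElement (∇ u x₀) * (expWeight u b t ε x₀ - τ)) :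
    ∃ x ∈ Ω, W < areaElement (∇ u x) * (expWeight u b t ε x - τ) ∧
      IsLocalMax (fun y => areaElement (∇ u y) * (expWeight u b t ε y - τ)) x := by
  have hτ_lt {y : E} (h : W < areaElement (Du y) * (expWeight u b t ε y - τ)) :
      τ < expWeight u b t ε y :=
    sub_pos.1 (pos_of_mul_pos_right (hW.trans_lt h) (areaElement_pos _).le)
  have hWcont : ContinuousOn (fun y => areaElement (Du y) * (expWeight u b t ε y - τ))
      (closure Ω) := by
    have hexp := continuousOn_expWeight (b := b) (t := t) (ε := ε) hu
    unfold areaElement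
    fun_prop
  have hcompact := isCompact_closure_inter_le_expWeight hu hb ht hε hτ
  rw [← hDu x₀ hx₀] at hWx₀
  obtain ⟨x, ⟨hxcl, -⟩, hmax⟩ := hcompact.exists_isMaxOn
    ⟨x₀, subset_closure hx₀, (hτ_lt hWx₀).le⟩ (hWcont.mono inter_subset_left)
  have hWx := hWx₀.trans_le (hmax ⟨subset_closure hx₀, (hτ_lt hWx₀).le⟩)
  have hx : x ∈ Ω := by
    by_contra hx
    have hle : expWeight u b t ε x - τ ≤ 1 := by
      linarith [expWeight_le_one ht hε.le (hb x hxcl)]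
    exact hWx.not_ge ((mul_le_of_le_one_right (areaElement_pos _).le hle).trans
      (hfrontier x (hΩ.frontier_eq ▸ ⟨hxcl, hx⟩)))
  refine ⟨x, hx, hDu x hx ▸ hWx, ?_⟩
  have hcont : ContinuousAt (expWeight u b t ε) x :=
    (continuousOn_expWeight hu).continuousAt (mem_of_superset (hΩ.mem_nhds hx) subset_closure)
  filter_upwards [hΩ.mem_nhds hx, hcont.eventually_const_lt (hτ_lt hWx)] with y hy hτy
  rw [← hDu x hx, ← hDu y hy]
  exact hmax ⟨subset_closure hy, hτy.le⟩

lemma areaElement_gradient_le_of_frontier_le [Nontrivial E] (hΩ : IsOpen Ω)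
    (hf : Differentiable ℝ f) (hu : ContDiffOn ℝ 3 u Ω) (hucl : ContinuousOn u (closure Ω))
    (hDu : ∀ x ∈ Ω, Du x = ∇ u x)
    (hDuc : ContinuousOn Du (closure Ω)) (heq : ∀ x ∈ Ω, meanCurvature u x + f (u x) = 0)
    (hf' : ∀ x ∈ Ω, deriv f (u x) ≤ 0) (hb : ∀ x ∈ Ω, b ≤ u x) {W : ℝ} (hW : 0 < W)
    (hW_sq : 1 + (Module.finrank ℝ E : ℝ) / 4 < W ^ 2)
    (hfrontier : ∀ x ∈ frontier Ω, areaElement (Du x) ≤ W) {x₀ : E} (hx₀ : x₀ ∈ Ω) :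
    areaElement (∇ u x₀) ≤ W := by
  by_contra! hWx₀
  have hδ : 0 < 1 - (1 + (Module.finrank ℝ E : ℝ) / 4) / W ^ 2 :=
    sub_pos.2 ((div_lt_one (by positivity)).2 hW_sq)
  obtain ⟨t, τ, ε, C, ht, hτ, hε, hC, hstart, herror⟩ :=
    exists_barrier_parameters hf.continuous u b x₀ (Module.finrank ℝ E) hWx₀ hδ
  have hbcl := le_on_closure hb continuousOn_const hucl
  obtain ⟨x, hx, hWx, hmax⟩ := exists_isLocalMax_areaElement_mul_expWeight hΩ hucl hDu hDuc hbcl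
    ht.le hε hτ hW.le hfrontier hx₀ hstart
  have hτx : τ ≤ expWeight u b t ε x :=
    (sub_pos.1 (pos_of_mul_pos_right (hW.trans hWx) (areaElement_pos _).le)).le
  have hCx : |f (u x)| ≤ C := hC _ ⟨hb x hx, le_add_of_le_expWeight ht hε.le hτ hτx⟩
  have hεx := mul_norm_le_sqrt_of_le_expWeight ht.le hε.le hτ (hb x hx) hτx
  have hbound := sq_mul_le_of_isLocalMax (hu.contDiffAt (hΩ.mem_nhds hx)) (hf _) (hf' x hx)
    (eventually_of_mem (hΩ.mem_nhds hx) heq) hτ hmax ht.le hε.le hCx (hb x hx) hW hWx.le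
  have hC0 := (abs_nonneg _).trans hCx
  have hεx' := mul_le_mul_of_nonneg_left hεx (show 0 ≤ 2 * (C + 2 * t) by positivity)
  linarith

lemma norm_gradient_le_of_norm_frontier_le (hΩ : IsOpen Ω) (hf : Differentiable ℝ f)
    (hu : ContDiffOn ℝ 3 u Ω) (hucl : ContinuousOn u (closure Ω)) (hDu : ∀ x ∈ Ω, Du x = ∇ u x)
    (hDuc : ContinuousOn Du (closure Ω)) (heq : ∀ x ∈ Ω, meanCurvature u x + f (u x) = 0)
    (hf' : ∀ x ∈ Ω, deriv f (u x) ≤ 0) (hb : ∀ x ∈ Ω, b ≤ u x) {A : ℝ}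
    (hA : √(Module.finrank ℝ E) / 2 ≤ A) (hfrontier : ∀ x ∈ frontier Ω, ‖Du x‖ ≤ A)
    {x₀ : E} (hx₀ : x₀ ∈ Ω) : ‖∇ u x₀‖ ≤ A := by
  have hA0 : 0 ≤ A := le_trans (by positivity) hA
  rcases subsingleton_or_nontrivial E
  · rwa [Subsingleton.elim (∇ u x₀) 0, norm_zero]
  have hA_sq : (Module.finrank ℝ E : ℝ) / 4 ≤ A ^ 2 := by
    linarith [(Real.sqrt_le_left (by positivity)).1 ((div_le_iff₀' two_pos).1 hA)]
  have harea : areaElement (∇ u x₀) ≤ √(1 + A ^ 2) := by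
    refine le_of_forall_gt_imp_ge_of_dense fun W hAW => ?_
    have hW : 0 < W := (Real.sqrt_nonneg _).trans_lt hAW
    refine areaElement_gradient_le_of_frontier_le hΩ hf hu hucl hDu hDuc heq hf' hb hW ?_
      (fun y hy => ?_) hx₀
    · linarith [(Real.sqrt_lt' hW).1 hAW]
    · refine (Real.sqrt_le_sqrt ?_).trans hAW.le
      gcongr
      exact hfrontier y hy
  rw [areaElement, Real.sqrt_le_sqrt_iff (by positivity)] at harea
  exact (pow_le_pow_iff_left₀ (norm_nonneg _) hA0 two_ne_zero).1 (le_of_add_le_add_left harea)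

theorem gradient_estimate_general (hΩ : IsOpen Ω) (hf : Differentiable ℝ f)
    (hu : ContDiffOn ℝ 3 u Ω) (hucl : ContinuousOn u (closure Ω)) (hDu : ∀ x ∈ Ω, Du x = ∇ u x)
    (hDuc : ContinuousOn Du (closure Ω)) (heq : ∀ x ∈ Ω, meanCurvature u x + f (u x) = 0)
    (hf' : ∀ x ∈ Ω, deriv f (u x) ≤ 0) (hbdd : BddBelow (u '' Ω)) :
    ∀ x ∈ Ω, ENNReal.ofReal ‖∇ u x‖ ≤ max (ENNReal.ofReal (√(Module.finrank ℝ E) / 2))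
      (⨆ p ∈ frontier Ω, ENNReal.ofReal ‖Du p‖) := by
  intro x hx
  obtain ⟨b, hb⟩ := hbdd
  set M := max (ENNReal.ofReal (√(Module.finrank ℝ E) / 2))
    (⨆ p ∈ frontier Ω, ENNReal.ofReal ‖Du p‖)
  rcases eq_or_ne M ∞ with htop | htop
  · exact htop ▸ le_top
  refine (ENNReal.ofReal_le_iff_le_toReal htop).2
    (norm_gradient_le_of_norm_frontier_le hΩ hf hu hucl hDu hDuc heq hf'
      (fun y hy => hb (mem_image_of_mem u hy)) ?_ (fun p hp => ?_) hx)
  · exact (ENNReal.ofReal_le_iff_le_toReal htop).1 (le_max_left _ _)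
  · exact (ENNReal.ofReal_le_iff_le_toReal htop).1 (le_max_of_le_right
      (le_iSup₂ (f := fun p _ => ENNReal.ofReal ‖Du p‖) p hp))

end GradientEstimate

/-- The Euclidean instance of the paper's interior gradient estimate
(Theorem 2.4 / Theorem A.2). -/
theorem gradient_estimate
    (n : ℕ) (Ω : Set (EuclideanSpace ℝ (Fin n)))
    (hne : Ω.Nonempty) (hΩ : IsOpen Ω) (hconn : IsConnected Ω)
    (f : ℝ → ℝ) (hf : ContDiff ℝ 1 f)
    (u : EuclideanSpace ℝ (Fin n) → ℝ)
    (hu3 : ContDiffOn ℝ 3 u Ω) (hucl : ContinuousOn u (closure Ω))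
    (Du : EuclideanSpace ℝ (Fin n) → EuclideanSpace ℝ (Fin n))
    (hDu : ∀ x ∈ Ω, Du x = gradient u x) (hDuc : ContinuousOn Du (closure Ω))
    (heq : ∀ x ∈ Ω, meanCurv u x + f (u x) = 0)
    (hfb : ∃ C, ∀ x ∈ Ω, |f (u x)| ≤ C)
    (hf' : ∀ x ∈ Ω, deriv f (u x) ≤ 0)
    (hbdd : BddBelow (u '' Ω)) :
    ∀ x ∈ Ω, ENNReal.ofReal ‖gradient u x‖
      ≤ max (ENNReal.ofReal (Real.sqrt ((n : ℝ) / 2)))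
          (⨆ p ∈ frontier Ω, ENNReal.ofReal ‖Du p‖) := by
  simp only [meanCurv_eq_meanCurvature] at heq
  exact fun x hx => (gradient_estimate_general hΩ (hf.differentiable one_ne_zero) hu3 hucl hDu hDuc
    heq hf' hbdd x hx).trans (max_le_max_right _ (ENNReal.ofReal_le_ofReal
      (by simpa using sqrt_div_two_le_sqrt_div_two n)))
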